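/- For u^{in}, f ∈ ℓ²(ℂ) and 0 < T < ∞, there exists a weak solution u ∈ L^∞([0,T], H) ∩ C([0,T], H_weak) of the inviscid sabra shell model, i.e. ⟨u(t), v⟩ + ∫₀ᵗ ⟨B(u(s),u(s)), v⟩ ds = ⟨u^{in}, v⟩ + t⟨f, v⟩ for all v ∈ V = D(A^{1/2}) and t ∈ [0,T]; moreover du/dt ∈ L^∞([0,T], V_{-1}). -/

import Mathlib

open Complex MeasureTheory

/-- Wavenumbers of the sabra shell model: `k n = k0 * λ^n`. -/
noncomputable def kk (k0 lam : ℝ) (n : ℤ) : ℝ := k0 * lam ^ n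

/-- Nonlinear term of the sabra shell model. -/
noncomputable def sB (a b c k0 lam : ℝ) (u : ℤ → ℂ) (n : ℤ) : ℂ :=
  -Complex.I * ((a : ℂ) * (kk k0 lam (n + 1) : ℝ) * u (n + 2) * (starRingEnd ℂ) (u (n + 1))
    + (b : ℂ) * (kk k0 lam n : ℝ) * u (n + 1) * (starRingEnd ℂ) (u (n - 1))
    - (c : ℂ) * (kk k0 lam (n - 1) : ℝ) * u (n - 1) * u (n - 2))

/-- Membership in `V = D(A^{1/2})` (test functions): zero boundary components and
`∑ k_n² |v_n|² < ∞`. -/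
def InTestV (k0 lam : ℝ) (v : ℤ → ℂ) : Prop :=
  (∀ n : ℤ, n ≤ 0 → v n = 0) ∧
  Summable fun n : ℕ => (kk k0 lam ((n : ℤ) + 1)) ^ 2 * ‖v ((n : ℤ) + 1)‖ ^ 2

/-- A weak solution of the forced inviscid sabra shell model on `[0,T]`:
`u ∈ L^∞([0,T],H) ∩ C([0,T],H_w)` (componentwise continuity plus a uniform ℓ² bound)
satisfying `⟨u(t),v⟩ + ∫₀ᵗ ⟨B(u(s),u(s)),v⟩ ds = ⟨u^{in},v⟩ + t⟨f,v⟩` for all `v ∈ V`. -/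
def IsWeakSolution (a b c k0 lam T : ℝ) (uin f : ℤ → ℂ) (u : ℝ → ℤ → ℂ) : Prop :=
  (∀ t : ℝ, ∀ n : ℤ, n ≤ 0 → u t n = 0) ∧
  (∃ M : ℝ, ∀ t ∈ Set.Icc (0 : ℝ) T,
    (Summable fun n : ℕ => ‖u t ((n : ℤ) + 1)‖ ^ 2) ∧
    (∑' n : ℕ, ‖u t ((n : ℤ) + 1)‖ ^ 2) ≤ M) ∧
  (∀ n : ℤ, ContinuousOn (fun t => u t n) (Set.Icc (0 : ℝ) T)) ∧
  (∀ v : ℤ → ℂ, InTestV k0 lam v → ∀ t ∈ Set.Icc (0 : ℝ) T,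
    (∑' n : ℕ, u t ((n : ℤ) + 1) * (starRingEnd ℂ) (v ((n : ℤ) + 1))) +
      (∫ s in (0 : ℝ)..t,
        ∑' n : ℕ, sB a b c k0 lam (u s) ((n : ℤ) + 1) * (starRingEnd ℂ) (v ((n : ℤ) + 1))) =
    (∑' n : ℕ, uin ((n : ℤ) + 1) * (starRingEnd ℂ) (v ((n : ℤ) + 1))) +
      (t : ℂ) * (∑' n : ℕ, f ((n : ℤ) + 1) * (starRingEnd ℂ) (v ((n : ℤ) + 1))))

/-!
Since `a + b + c = 0`, every triad of neighbouring shells conserves energy, so the truncations to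
the shells `1, …, N` satisfy `d/dt ‖u‖² ≤ ‖u‖² + ‖f‖²`; Grönwall's inequality makes them global and
bounds their energy uniformly in `N`. Each coordinate of `B(u, u)` involves finitely many shells and
is bounded by a constant depending only on the energy and the shell, so by Arzelà–Ascoli a
subsequence converges in every coordinate, uniformly in time, and its limit solves the integrated
equation shell by shell. As `B` maps bounded sets of `H` to bounded sets of `V_{-1}`, the velocity
`f - B(u, u)` is bounded in `V_{-1}`, and the shellwise equations can be paired with any `v ∈ V` by
dominated convergence.
-/

section SabraShellModel

open Filter Topology

section DissipativeFlow

variable {E : Type*} [NormedAddCommGroup E]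

theorem exists_hasDerivWithinAt_of_lipschitzWith [NormedSpace ℝ E] [CompleteSpace E] {V : E → E}
    {K : NNReal} (hV : LipschitzWith K V) {C : ℝ} (hC : ∀ x, ‖V x‖ ≤ C) {T : ℝ} (hT : 0 ≤ T)
    (x₀ : E) :
    ∃ α : ℝ → E, α 0 = x₀ ∧
      ∀ t ∈ Set.Icc 0 T, HasDerivWithinAt α (V (α t)) (Set.Icc 0 T) t := by
  have hC₀ : 0 ≤ C := (norm_nonneg _).trans (hC x₀)
  have hPL : IsPicardLindelof (fun _ => V) (⟨0, le_rfl, hT⟩ : Set.Icc 0 T) x₀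
      (C.toNNReal * T.toNNReal) 0 C.toNNReal K := by
    refine .of_time_independent (fun x _ => ?_) hV.lipschitzOnWith ?_
    · simpa only [Real.coe_toNNReal _ hC₀] using hC x
    · simp [hT, hC₀]
  exact hPL.exists_eq_forall_mem_Icc_hasDerivWithinAt₀

variable [InnerProductSpace ℝ E] {V : E → E} {K ε T : ℝ}

theorem sq_norm_le_gronwallBound_of_inner_le
    (hV : ∀ x, 2 * inner ℝ x (V x) ≤ K * ‖x‖ ^ 2 + ε) {α : ℝ → E}
    (hα : ∀ t ∈ Set.Icc 0 T, HasDerivWithinAt α (V (α t)) (Set.Icc 0 T) t)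
    {δ : ℝ} (hδ : ‖α 0‖ ^ 2 ≤ δ) {t : ℝ} (ht : t ∈ Set.Icc 0 T) :
    ‖α t‖ ^ 2 ≤ gronwallBound δ K ε t := by
  have hsq (s : ℝ) (hs : s ∈ Set.Icc 0 T) : HasDerivWithinAt (fun s => ‖α s‖ ^ 2)
      (2 * inner ℝ (α s) (V (α s))) (Set.Icc 0 T) s := (hα s hs).norm_sq
  have h := le_gronwallBound_of_liminf_deriv_right_le
    (f := fun s => ‖α s‖ ^ 2) (f' := fun s => 2 * inner ℝ (α s) (V (α s)))
    (fun s hs => (hsq s hs).continuousWithinAt) (fun s hs _ hr => ?_) hδ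
    (fun s _ => hV (α s)) t ht
  · simpa only [sub_zero] using h
  · exact ((hsq s ⟨hs.1, hs.2.le⟩).mono_of_mem_nhdsWithin
      (Icc_mem_nhdsGE_of_mem hs)).liminf_right_slope_le hr

/-- Cutting `V` off outside a large ball keeps the estimate on `⟪x, V x⟫`, whose Grönwall bound
then prevents the truncated trajectory from ever leaving that ball. -/
theorem exists_hasDerivWithinAt_of_inner_le [FiniteDimensional ℝ E] (hV : ContDiff ℝ 1 V)
    (hK : 0 ≤ K) (hε : 0 ≤ ε) (hVle : ∀ x, 2 * inner ℝ x (V x) ≤ K * ‖x‖ ^ 2 + ε)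
    (hT : 0 ≤ T) (x₀ : E) :
    ∃ α : ℝ → E, α 0 = x₀ ∧
      ∀ t ∈ Set.Icc 0 T, HasDerivWithinAt α (V (α t)) (Set.Icc 0 T) t := by
  set R := gronwallBound (‖x₀‖ ^ 2) K ε T
  let χ : ContDiffBump (0 : E) := ⟨√R + 1, √R + 2, by positivity, by linarith⟩
  let W : E → E := fun x => χ x • V x
  have hW : ContDiff ℝ 1 W := χ.contDiff.smul hV
  have hWsupp : HasCompactSupport W := χ.hasCompactSupport.smul_right
  have hWle (x : E) : 2 * inner ℝ x (W x) ≤ K * ‖x‖ ^ 2 + ε := calc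
    2 * inner ℝ x (W x) = χ x * (2 * inner ℝ x (V x)) := by
      rw [real_inner_smul_right, mul_left_comm]
    _ ≤ χ x * (K * ‖x‖ ^ 2 + ε) := mul_le_mul_of_nonneg_left (hVle x) χ.nonneg
    _ ≤ K * ‖x‖ ^ 2 + ε := mul_le_of_le_one_left (by positivity) χ.le_one
  obtain ⟨L, hL⟩ := hW.lipschitzWith_of_hasCompactSupport hWsupp one_ne_zero
  obtain ⟨C, hC⟩ := hWsupp.exists_bound_of_continuous hW.continuous
  obtain ⟨α, rfl, hα⟩ := exists_hasDerivWithinAt_of_lipschitzWith hL hC hT x₀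
  refine ⟨α, rfl, fun t ht => ?_⟩
  have hαR : ‖α t‖ ^ 2 ≤ R := (sq_norm_le_gronwallBound_of_inner_le hWle hα le_rfl ht).trans
    (gronwallBound_mono (sq_nonneg _) hε hK ht.2)
  have hχ : χ (α t) = 1 := χ.one_of_mem_closedBall <| mem_closedBall_zero_iff.2 <|
    (Real.le_sqrt_of_sq_le hαR).trans (le_add_of_nonneg_right zero_le_one)
  simpa only [W, hχ, one_smul] using hα t ht

end DissipativeFlow

section SquareSums

variable {ι κ E F : Type*} [NormedAddCommGroup E] [NormedAddCommGroup F] {u v : ι → E} {M N : ℝ}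

/-- `u` lies in the ball of squared radius `M` of `ℓ²(ι, E)`. Bounding the finite partial sums
makes the condition visibly closed under coordinatewise limits. -/
def EnergyLE (u : ι → E) (M : ℝ) : Prop := ∀ s : Finset ι, ∑ i ∈ s, ‖u i‖ ^ 2 ≤ M

namespace EnergyLE

theorem of_summable (hu : Summable fun i => ‖u i‖ ^ 2) : EnergyLE u (∑' i, ‖u i‖ ^ 2) :=
  fun s => hu.sum_le_tsum s fun _ _ => sq_nonneg _

theorem of_sum_le {s : Finset ι} (hu : ∀ i ∉ s, u i = 0) (hM : ∑ i ∈ s, ‖u i‖ ^ 2 ≤ M) :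
    EnergyLE u M := by
  classical
  intro r
  calc ∑ i ∈ r, ‖u i‖ ^ 2 ≤ ∑ i ∈ s ∪ r, ‖u i‖ ^ 2 :=
        Finset.sum_le_sum_of_subset_of_nonneg Finset.subset_union_right fun _ _ _ => sq_nonneg _
    _ = ∑ i ∈ s, ‖u i‖ ^ 2 :=
        (Finset.sum_subset Finset.subset_union_left fun i _ hi => by simp [hu i hi]).symm
    _ ≤ M := hM

theorem of_tendsto {α : Type*} {l : Filter α} [l.NeBot] {w : α → ι → E}
    (hw : ∀ j, EnergyLE (w j) M) (hlim : Tendsto w l (𝓝 u)) : EnergyLE u M := fun s =>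
  le_of_tendsto' (tendsto_finsetSum s fun i _ => (tendsto_pi_nhds.1 hlim i).norm.pow 2)
    fun j => hw j s

theorem summable (hu : EnergyLE u M) : Summable fun i => ‖u i‖ ^ 2 :=
  summable_of_sum_le (fun _ => sq_nonneg _) hu

theorem tsum_le (hu : EnergyLE u M) : ∑' i, ‖u i‖ ^ 2 ≤ M := hu.summable.tsum_le_of_sum_le hu

theorem norm_le_sqrt (hu : EnergyLE u M) (i : ι) : ‖u i‖ ≤ √M :=
  Real.le_sqrt_of_sq_le (by simpa only [Finset.sum_singleton] using hu {i})

theorem comp_injective (hu : EnergyLE u M) {e : κ → ι} (he : e.Injective) :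
    EnergyLE (u ∘ e) M := fun s => (Finset.sum_map s ⟨e, he⟩ _).symm.trans_le (hu _)

theorem of_norm_le {w : ι → F} (hu : EnergyLE u M) {C : ℝ} (hw : ∀ i, ‖w i‖ ≤ C * ‖u i‖) :
    EnergyLE w (C ^ 2 * M) := fun s => calc
  ∑ i ∈ s, ‖w i‖ ^ 2 ≤ ∑ i ∈ s, (C * ‖u i‖) ^ 2 :=
    Finset.sum_le_sum fun i _ => pow_le_pow_left₀ (norm_nonneg _) (hw i) 2
  _ = C ^ 2 * ∑ i ∈ s, ‖u i‖ ^ 2 := by simp only [mul_pow, Finset.mul_sum]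
  _ ≤ C ^ 2 * M := mul_le_mul_of_nonneg_left (hu s) (sq_nonneg C)

theorem norm (hu : EnergyLE u M) : EnergyLE (fun i => ‖u i‖) M := by
  simpa only [EnergyLE, norm_norm] using hu

theorem add (hu : EnergyLE u M) (hv : EnergyLE v N) :
    EnergyLE (fun i => u i + v i) (2 * (M + N)) := fun s => calc
  ∑ i ∈ s, ‖u i + v i‖ ^ 2 ≤ ∑ i ∈ s, 2 * (‖u i‖ ^ 2 + ‖v i‖ ^ 2) :=
    Finset.sum_le_sum fun i _ =>
      (pow_le_pow_left₀ (norm_nonneg _) (norm_add_le _ _) 2).trans add_sq_le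
  _ = 2 * (∑ i ∈ s, ‖u i‖ ^ 2 + ∑ i ∈ s, ‖v i‖ ^ 2) := by
    rw [← Finset.mul_sum, Finset.sum_add_distrib]
  _ ≤ 2 * (M + N) := by gcongr <;> apply_assumption

theorem neg (hu : EnergyLE u M) : EnergyLE (fun i => -u i) M := by
  simpa only [EnergyLE, norm_neg] using hu

theorem sum_norm_mul_norm_le {w : ι → F} (hu : EnergyLE u M) (hw : EnergyLE w N) (s : Finset ι) :
    ∑ i ∈ s, ‖u i‖ * ‖w i‖ ≤ (M + N) / 2 := by
  have h := Finset.sum_le_sum fun i (_ : i ∈ s) => two_mul_le_add_sq ‖u i‖ ‖w i‖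
  simp only [mul_assoc, ← Finset.mul_sum, Finset.sum_add_distrib] at h
  linarith [hu s, hw s]

end EnergyLE

end SquareSums

section Limits

variable {ι : Type*} [Countable ι]

/-- Arzelà–Ascoli in each coordinate; Tychonoff's theorem replaces the diagonal extraction. -/
theorem exists_subseq_tendsto_of_equicontinuous {X E : Type*} [TopologicalSpace X] [CompactSpace X]
    [MetricSpace E] {w : ℕ → X → ι → E} (hw : ∀ i, Equicontinuous fun N x => w N x i)
    {B : ι → Set E} (hB : ∀ i, IsCompact (B i)) (hwB : ∀ N x i, w N x i ∈ B i) :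
    ∃ (φ : ℕ → ℕ) (u : X → ι → E), StrictMono φ ∧ Continuous u ∧
      ∀ x, Tendsto (fun j => w (φ j) x) atTop (𝓝 (u x)) := by
  let g : ℕ → ι → BoundedContinuousFunction X E := fun N i =>
    BoundedContinuousFunction.mkOfCompact ⟨fun x => w N x i, (hw i).continuous N⟩
  have hcompact (i : ι) : IsCompact (closure (Set.range fun N => g N i)) := by
    refine BoundedContinuousFunction.arzela_ascoli (B i) (hB i) _ ?_ fun x U hU => ?_
    · rintro _ x ⟨N, rfl⟩
      exact hwB N x i
    · filter_upwards [hw i x U hU] with y hy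
      rintro ⟨_, N, rfl⟩
      exact hy N
  obtain ⟨G, -, φ, hφ, hG⟩ := (isCompact_univ_pi hcompact).tendsto_subseq (x := g)
    fun N i _ => subset_closure ⟨N, rfl⟩
  refine ⟨φ, fun x i => G i x, hφ, continuous_pi fun i => (G i).continuous, fun x => ?_⟩
  exact tendsto_pi_nhds.2 fun i => ((BoundedContinuousFunction.lipschitz_eval_const
    x).continuous.tendsto (G i)).comp (tendsto_pi_nhds.1 hG i)

theorem hasSum_intervalIntegral_of_sum_norm_le {E : Type*} [NormedAddCommGroup E] [NormedSpace ℝ E]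
    [CompleteSpace E] {p : ι → ℝ → E} {a b C : ℝ}
    (hp : ∀ i, IntervalIntegrable (p i) volume a b)
    (hC : ∀ t ∈ Set.uIoc a b, ∀ s : Finset ι, ∑ i ∈ s, ‖p i t‖ ≤ C) :
    HasSum (fun i => ∫ t in a..b, p i t) (∫ t in a..b, ∑' i, p i t) := by
  have hsum (t : ℝ) (ht : t ∈ Set.uIoc a b) : HasSum (fun i => p i t) (∑' i, p i t) :=
    (Summable.of_norm (summable_of_sum_le (fun _ => norm_nonneg _) (hC t ht))).hasSum
  have hps (s : Finset ι) : IntervalIntegrable (fun t => ∑ i ∈ s, p i t) volume a b := by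
    simpa only [Finset.sum_fn] using IntervalIntegrable.sum s fun i _ => hp i
  have hlim := intervalIntegral.tendsto_integral_filter_of_dominated_convergence
    (F := fun (s : Finset ι) t => ∑ i ∈ s, p i t) (l := atTop) (fun _ => C)
    (.of_forall fun s => (hps s).def'.aestronglyMeasurable)
    (.of_forall fun s => .of_forall fun t ht => (norm_sum_le s _).trans (hC t ht s))
    intervalIntegrable_const (.of_forall hsum)
  simpa only [HasSum, SummationFilter.unconditional_filter,
    intervalIntegral.integral_finsetSum fun i _ => hp i] using hlim

end Limits

section Galerkin

variable {ι E : Type*} [NormedAddCommGroup E]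

open Classical in
/-- Extension by zero of a state supported on the finite set `S` of modes. The states carry the
Euclidean norm, so that it matches `EnergyLE`. -/
noncomputable def extendZero (S : Finset ι) (x : PiLp 2 fun _ : S => E) (i : ι) : E :=
  if h : i ∈ S then x ⟨i, h⟩ else 0

theorem extendZero_coe {S : Finset ι} (x : PiLp 2 fun _ : S => E) (i : S) :
    extendZero S x i = x i := dif_pos i.2

theorem extendZero_of_notMem {S : Finset ι} (x : PiLp 2 fun _ : S => E) {i : ι} (hi : i ∉ S) :
    extendZero S x i = 0 := dif_neg hi

theorem sum_sq_norm_extendZero {S : Finset ι} (x : PiLp 2 fun _ : S => E) :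
    ∑ i ∈ S, ‖extendZero S x i‖ ^ 2 = ‖x‖ ^ 2 := by
  simp only [← Finset.sum_coe_sort S, extendZero_coe, PiLp.norm_sq_eq_of_L2]

section NormedSpace

variable [NormedSpace ℝ E]

theorem contDiff_extendZero {n : WithTop ℕ∞} (S : Finset ι) (i : ι) :
    ContDiff ℝ n fun x : PiLp 2 (fun _ : S => E) => extendZero S x i := by
  by_cases hi : i ∈ S
  · lift i to S using hi
    simp only [extendZero_coe]
    exact (PiLp.proj 2 (fun _ : S => E) i : _ →L[ℝ] E).contDiff
  · simpa only [extendZero_of_notMem _ hi] using contDiff_const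

/-- `w` is supported on the modes in `S`, where it solves `u' = V u` on `[0, T]` with initial
state `u₀`. -/
structure IsGalerkinSolution (V : (ι → E) → ι → E) (S : Finset ι) (u₀ : ι → E) (T : ℝ)
    (w : ℝ → ι → E) : Prop where
  eq_zero : ∀ t, ∀ i ∉ S, w t i = 0
  initial : ∀ i ∈ S, w 0 i = u₀ i
  hasDerivWithinAt : ∀ i ∈ S, ∀ t ∈ Set.Icc 0 T,
    HasDerivWithinAt (fun t => w t i) (V (w t) i) (Set.Icc 0 T) t

variable {V : (ι → E) → ι → E} {u₀ : ι → E} {T : ℝ}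

namespace IsGalerkinSolution

variable {S : Finset ι} {w : ℝ → ι → E}

theorem lipschitzOnWith (hw : IsGalerkinSolution V S u₀ T w) {i : ι} {C : ℝ}
    (hC : ∀ t ∈ Set.Icc 0 T, ‖V (w t) i‖ ≤ C) :
    LipschitzOnWith C.toNNReal (fun t => w t i) (Set.Icc 0 T) := by
  by_cases hi : i ∈ S
  · exact (convex_Icc 0 T).lipschitzOnWith_of_nnnorm_hasDerivWithin_le (hw.hasDerivWithinAt i hi)
      fun t ht => NNReal.coe_le_coe.1 ((hC t ht).trans (Real.le_coe_toNNReal C))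
  · simpa only [hw.eq_zero _ i hi] using (LipschitzWith.const' 0).lipschitzOnWith

theorem continuousOn (hw : IsGalerkinSolution V S u₀ T w) : ContinuousOn w (Set.Icc 0 T) := by
  refine continuousOn_pi.2 fun i => ?_
  by_cases hi : i ∈ S
  · exact fun t ht => (hw.hasDerivWithinAt i hi t ht).continuousWithinAt
  · simpa only [hw.eq_zero _ i hi] using continuousOn_const

theorem eq_add_integral [CompleteSpace E] (hw : IsGalerkinSolution V S u₀ T w) {i : ι} (hi : i ∈ S)
    (hV : Continuous fun u => V u i) {t : ℝ} (ht : t ∈ Set.Icc 0 T) :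
    w t i = u₀ i + ∫ s in (0 : ℝ)..t, V (w s) i := by
  have hsub : Set.Icc 0 t ⊆ Set.Icc 0 T := Set.Icc_subset_Icc_right ht.2
  have hint : IntervalIntegrable (fun s => V (w s) i) volume 0 t :=
    ((hV.comp_continuousOn hw.continuousOn).mono hsub).intervalIntegrable_of_Icc ht.1
  rw [intervalIntegral.integral_eq_sub_of_hasDerivAt_of_le ht.1
    ((continuousOn_pi.1 hw.continuousOn i).mono hsub) (fun s hs => ?_) hint, hw.initial i hi,
    add_sub_cancel]
  exact (hw.hasDerivWithinAt i hi s (hsub (Set.Ioo_subset_Icc_self hs))).hasDerivAt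
    (Icc_mem_nhds hs.1 (hs.2.trans_le ht.2))

end IsGalerkinSolution

theorem eq_add_integral_of_tendsto {α : Type*} {l : Filter α} [l.NeBot]
    [l.IsCountablyGenerated] {w : α → ℝ → ι → E} {u : ℝ → ι → E} {i : ι} {C t : ℝ}
    (hV : Continuous fun u => V u i)
    (hlim : ∀ s ∈ Set.uIcc 0 t, Tendsto (fun j => w j s) l (𝓝 (u s)))
    (hw : ∀ j, ContinuousOn (w j) (Set.uIcc 0 t))
    (hC : ∀ j, ∀ s ∈ Set.uIcc 0 t, ‖V (w j s) i‖ ≤ C)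
    (heq : ∀ᶠ j in l, w j t i = u₀ i + ∫ s in (0 : ℝ)..t, V (w j s) i) :
    u t i = u₀ i + ∫ s in (0 : ℝ)..t, V (u s) i := by
  have hmono : Set.uIoc 0 t ⊆ Set.uIcc 0 t := Set.uIoc_subset_uIcc
  have hint := intervalIntegral.tendsto_integral_filter_of_dominated_convergence
    (F := fun j s => V (w j s) i) (f := fun s => V (u s) i) (l := l) (μ := volume) (fun _ => C)
    (.of_forall fun j =>
      ((hV.comp_continuousOn (hw j)).mono hmono).aestronglyMeasurable measurableSet_uIoc)
    (.of_forall fun j => .of_forall fun s hs => hC j s (hmono hs)) intervalIntegrable_const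
    (.of_forall fun s hs => (hV.tendsto _).comp (hlim s (hmono hs)))
  exact tendsto_nhds_unique (tendsto_pi_nhds.1 (hlim t Set.right_mem_uIcc) i)
    ((hint.const_add (u₀ i)).congr' (heq.mono fun j hj => hj.symm))

end NormedSpace

variable [InnerProductSpace ℝ E]

/-- The truncation to the modes in `S` of the infinite system `u' = V u` is an ordinary
differential equation with a `C¹` right-hand side that obeys the energy inequality
`d/dt ‖u‖² ≤ K ‖u‖² + ε`. -/
structure IsGalerkinAdmissible (V : (ι → E) → ι → E) (S : Finset ι) (K ε : ℝ) : Prop where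
  contDiff : ∀ i, ContDiff ℝ 1 fun x : PiLp 2 (fun _ : S => E) => V (extendZero S x) i
  inner_le : ∀ u : ι → E, (∀ i ∉ S, u i = 0) →
    2 * ∑ i ∈ S, inner ℝ (u i) (V u i) ≤ K * ∑ i ∈ S, ‖u i‖ ^ 2 + ε

variable {V : (ι → E) → ι → E} {u₀ : ι → E} {K ε T A : ℝ}

theorem IsGalerkinAdmissible.exists_isGalerkinSolution [FiniteDimensional ℝ E] {S : Finset ι}
    (hV : IsGalerkinAdmissible V S K ε) (hK : 0 ≤ K) (hε : 0 ≤ ε) (hT : 0 ≤ T)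
    (hA : EnergyLE u₀ A) :
    ∃ w, IsGalerkinSolution V S u₀ T w ∧
      ∀ t ∈ Set.Icc 0 T, EnergyLE (w t) (gronwallBound A K ε t) := by
  let VS : PiLp 2 (fun _ : S => E) → PiLp 2 (fun _ : S => E) := fun x =>
    WithLp.toLp 2 fun i => V (extendZero S x) i
  have hVS : ContDiff ℝ 1 VS := contDiff_piLp _ |>.2 fun i => hV.contDiff i
  have hVSle (x : PiLp 2 fun _ : S => E) : 2 * inner ℝ x (VS x) ≤ K * ‖x‖ ^ 2 + ε := by
    simpa only [← sum_sq_norm_extendZero, PiLp.inner_apply, VS, ← Finset.sum_coe_sort S,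
      extendZero_coe] using hV.inner_le (extendZero S x) fun i => extendZero_of_notMem x
  obtain ⟨α, hα₀, hα⟩ := exists_hasDerivWithinAt_of_inner_le hVS hK hε hVSle hT
    (WithLp.toLp 2 fun i : S => u₀ i)
  have hα₀A : ‖α 0‖ ^ 2 ≤ A := by
    simpa only [hα₀, PiLp.norm_sq_eq_of_L2, Finset.sum_coe_sort S fun i => ‖u₀ i‖ ^ 2] using hA S
  refine ⟨fun t => extendZero S (α t), ⟨fun t i => extendZero_of_notMem _, fun i hi => ?_,
    fun i hi t ht => ?_⟩, fun t ht => .of_sum_le (fun i => extendZero_of_notMem _) ?_⟩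
  · lift i to S using hi
    rw [extendZero_coe, hα₀]
  · lift i to S using hi
    simp only [extendZero_coe]
    exact (PiLp.proj 2 (fun _ : S => E) i : _ →L[ℝ] E).hasFDerivAt.comp_hasDerivWithinAt t (hα t ht)
  · rw [sum_sq_norm_extendZero]
    exact sq_norm_le_gronwallBound_of_inner_le hVSle hα hα₀A ht

theorem exists_integral_solution_of_galerkin [Countable ι] [FiniteDimensional ℝ E]
    {S : ℕ → Finset ι} (hS : Monotone S) (hV : ∀ N, IsGalerkinAdmissible V (S N) K ε)
    (hVc : ∀ i, Continuous fun u => V u i) (hK : 0 ≤ K) (hε : 0 ≤ ε) (hT : 0 ≤ T)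
    (hA : EnergyLE u₀ A) {C : ι → ℝ}
    (hC : ∀ u, EnergyLE u (gronwallBound A K ε T) → ∀ i, ‖V u i‖ ≤ C i) :
    ∃ u : ℝ → ι → E, (∀ t i, (∀ N, i ∉ S N) → u t i = 0) ∧ Continuous u ∧
      (∀ t, EnergyLE (u t) (gronwallBound A K ε T)) ∧
      ∀ N, ∀ i ∈ S N, ∀ t ∈ Set.Icc 0 T, u t i = u₀ i + ∫ s in (0 : ℝ)..t, V (u s) i := by
  have hA₀ : 0 ≤ A := by simpa using hA ∅
  choose w hw hwM using fun N => (hV N).exists_isGalerkinSolution hK hε hT hA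
  have hwT (N : ℕ) (t : ℝ) (ht : t ∈ Set.Icc 0 T) :
      EnergyLE (w N t) (gronwallBound A K ε T) := fun s =>
    (hwM N t ht s).trans (gronwallBound_mono hA₀ hε hK ht.2)
  have hequi (i : ι) : Equicontinuous fun N (t : Set.Icc 0 T) => w N t i :=
    (LipschitzWith.uniformEquicontinuous _ (C i).toNNReal fun N => lipschitzOnWith_iff_restrict.1
      ((hw N).lipschitzOnWith fun t ht => hC _ (hwT N t ht) i)).equicontinuous
  obtain ⟨φ, u, hφ, hu, hlim⟩ := exists_subseq_tendsto_of_equicontinuous hequi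
    (fun _ => isCompact_closedBall 0 _)
    fun N t i => mem_closedBall_zero_iff.2 ((hwT N t t.2).norm_le_sqrt i)
  refine ⟨Set.IccExtend hT u, fun t i hi => ?_, hu.Icc_extend', fun t => ?_, fun N i hi t ht => ?_⟩
  · refine tendsto_nhds_unique (tendsto_pi_nhds.1 (hlim _) i) ?_
    simpa only [(hw _).eq_zero _ i (hi _)] using tendsto_const_nhds
  · exact .of_tendsto (fun j => hwT (φ j) _ (Set.projIcc 0 T hT t).2) (hlim _)
  · have hsub : Set.uIcc 0 t ⊆ Set.Icc 0 T := Set.uIcc_subset_Icc ⟨le_rfl, hT⟩ ht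
    refine eq_add_integral_of_tendsto (w := w ∘ φ) (l := atTop) (hVc i) (fun s hs => ?_)
      (fun j => (hw _).continuousOn.mono hsub) (fun j s hs => hC _ (hwT _ s (hsub hs)) i) ?_
    · simpa only [Set.IccExtend_of_mem hT u (hsub hs), Function.comp_apply] using hlim ⟨s, hsub hs⟩
    · filter_upwards [eventually_ge_atTop N] with j hj
      exact (hw _).eq_add_integral (hS (hj.trans (hφ.id_le j)) hi) (hVc i) ht

end Galerkin

section Nonlinearity

variable {a b c k0 lam : ℝ}

theorem kk_pos (hk0 : 0 < k0) (hlam : 0 < lam) (n : ℤ) : 0 < kk k0 lam n :=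
  mul_pos hk0 (zpow_pos hlam n)

theorem kk_add_one (hlam : lam ≠ 0) (n : ℤ) : kk k0 lam (n + 1) = kk k0 lam n * lam := by
  rw [kk, kk, zpow_add_one₀ hlam, mul_assoc]

theorem kk_sub_one (hlam : lam ≠ 0) (n : ℤ) : kk k0 lam (n - 1) = kk k0 lam n / lam := by
  rw [kk, kk, zpow_sub_one₀ hlam, div_eq_mul_inv, mul_assoc]

theorem le_kk (hk0 : 0 ≤ k0) (hlam : 1 ≤ lam) {n : ℤ} (hn : 0 ≤ n) : k0 ≤ kk k0 lam n :=
  le_mul_of_one_le_right hk0 (one_le_zpow₀ hlam hn)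

theorem continuous_sB (n : ℤ) : Continuous fun u : ℤ → ℂ => sB a b c k0 lam u n := by
  unfold sB
  fun_prop

theorem contDiff_sB {X : Type*} [NormedAddCommGroup X] [NormedSpace ℝ X] {m : WithTop ℕ∞}
    {w : X → ℤ → ℂ} (hw : ∀ n, ContDiff ℝ m fun x => w x n) (n : ℤ) :
    ContDiff ℝ m fun x => sB a b c k0 lam (w x) n := by
  have hconj (j : ℤ) : ContDiff ℝ m fun x => (starRingEnd ℂ) (w x j) :=
    Complex.conjCLE.contDiff.comp (hw j)
  exact contDiff_const.mul ((((contDiff_const.mul (hw _)).mul (hconj _)).add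
    ((contDiff_const.mul (hw _)).mul (hconj _))).sub ((contDiff_const.mul (hw _)).mul (hw _)))

/-- The interaction of the shells `n`, `n + 1`, `n + 2`. Each of the three terms of `sB` is one
such triad seen from one of its shells, so the triad enters the energy balance of these shells
with the weights `a`, `b`, `c`. -/
noncomputable def triadTransfer (k0 lam : ℝ) (u : ℤ → ℂ) (n : ℤ) : ℝ :=
  ((kk k0 lam (n + 1) : ℝ) * u (n + 2) * (starRingEnd ℂ) (u (n + 1)) *
    (starRingEnd ℂ) (u n) : ℂ).im

theorem inner_sB_eq_triadTransfer (u : ℤ → ℂ) (n : ℤ) :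
    inner ℝ (u n) (sB a b c k0 lam u n) =
      a * triadTransfer k0 lam u n + b * triadTransfer k0 lam u (n - 1) +
        c * triadTransfer k0 lam u (n - 2) := by
  have h₁ : n - 1 + 1 = n := by ring
  have h₂ : n - 1 + 2 = n + 1 := by ring
  have h₃ : n - 2 + 1 = n - 1 := by ring
  have h₄ : n - 2 + 2 = n := by ring
  simp only [triadTransfer, sB, h₁, h₂, h₃, h₄, Complex.inner, Complex.mul_re, Complex.mul_im,
    Complex.add_re, Complex.add_im, Complex.sub_re, Complex.sub_im, Complex.neg_re,
    Complex.neg_im, Complex.I_re, Complex.I_im, Complex.conj_re, Complex.conj_im,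
    Complex.ofReal_re, Complex.ofReal_im]
  ring

theorem sum_inner_sB_eq_zero (habc : a + b + c = 0) {u : ℤ → ℂ} {s : Finset ℤ}
    (hu : ∀ n ∉ s, u n = 0) :
    ∑ n ∈ s, inner ℝ (u n) (sB a b c k0 lam u n) = 0 := by
  set τ := triadTransfer k0 lam u
  have hτ : HasSum τ (∑ n ∈ s, τ n) :=
    hasSum_sum_of_ne_finset_zero fun n hn => by simp [τ, triadTransfer, hu n hn]
  have hshift (m : ℤ) : HasSum (fun n => τ (n - m)) (∑ n ∈ s, τ n) :=
    (Equiv.subRight m).hasSum_iff.2 hτ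
  have hinner : HasSum (fun n => inner ℝ (u n) (sB a b c k0 lam u n))
      (∑ n ∈ s, inner ℝ (u n) (sB a b c k0 lam u n)) :=
    hasSum_sum_of_ne_finset_zero fun n hn => by rw [hu n hn, inner_zero_left]
  have htriads := ((hτ.mul_left a).add ((hshift 1).mul_left b)).add ((hshift 2).mul_left c)
  simp only [τ, ← inner_sB_eq_triadTransfer] at htriads
  rw [hinner.unique htriads, ← add_mul, ← add_mul, habc, zero_mul]

theorem norm_sB_le (hk0 : 0 < k0) (hlam : 0 < lam) {R : ℝ} {u : ℤ → ℂ} (hu : ∀ m, ‖u m‖ ≤ R)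
    (n : ℤ) :
    ‖sB a b c k0 lam u n‖ ≤
      kk k0 lam n * ((|a| * lam + |b| + |c| / lam) * R * (‖u (n + 1)‖ + ‖u (n - 1)‖)) := by
  have hR : 0 ≤ R := (norm_nonneg _).trans (hu 0)
  set k := kk k0 lam n
  have hk : 0 < k := kk_pos hk0 hlam n
  set x := ‖u (n + 1)‖
  set y := ‖u (n - 1)‖
  have hnorm (d : ℝ) (m : ℤ) (z z' : ℂ) :
      ‖(d : ℂ) * (kk k0 lam m : ℝ) * z * z'‖ = |d| * kk k0 lam m * ‖z‖ * ‖z'‖ := by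
    simp only [norm_mul, Complex.norm_real, Real.norm_eq_abs, abs_of_pos (kk_pos hk0 hlam m)]
  calc ‖sB a b c k0 lam u n‖
      ≤ |a| * (k * lam) * ‖u (n + 2)‖ * x + |b| * k * x * y
          + |c| * (k / lam) * y * ‖u (n - 2)‖ := by
        rw [sB, norm_mul, norm_neg, Complex.norm_I, one_mul]
        refine ((norm_sub_le _ _).trans (add_le_add_left (norm_add_le _ _) _)).trans_eq ?_
        rw [hnorm, hnorm, hnorm, RCLike.norm_conj, RCLike.norm_conj, kk_add_one hlam.ne',
          kk_sub_one hlam.ne']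
    _ ≤ |a| * (k * lam) * R * (x + y) + |b| * k * (x + y) * R
          + |c| * (k / lam) * (x + y) * R := by
        gcongr
        · exact hu _
        · exact le_add_of_nonneg_right (norm_nonneg _)
        · exact le_add_of_nonneg_right (norm_nonneg _)
        · exact hu _
        · exact le_add_of_nonneg_left (norm_nonneg _)
        · exact hu _
    _ = k * ((|a| * lam + |b| + |c| / lam) * R * (x + y)) := by ring

/-- A bound for the squared `V_{-1}` norm of `B(u, u)` at states `u` of energy at most `M`. -/
noncomputable def sBDualBound (a b c lam M : ℝ) : ℝ :=
  ((|a| * lam + |b| + |c| / lam) * √M) ^ 2 * (2 * (M + M))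

theorem energyLE_inv_kk_smul_sB (hk0 : 0 < k0) (hlam : 0 < lam) {u : ℤ → ℂ} {M : ℝ}
    (hu : EnergyLE u M) :
    EnergyLE (fun n => (kk k0 lam n)⁻¹ • sB a b c k0 lam u n) (sBDualBound a b c lam M) := by
  refine ((hu.norm.comp_injective (add_left_injective 1)).add
    (hu.norm.comp_injective (sub_left_injective (b := 1)))).of_norm_le fun n => ?_
  have hk := kk_pos hk0 hlam n
  rw [norm_smul, norm_inv, Real.norm_of_nonneg hk.le, inv_mul_le_iff₀ hk, Real.norm_of_nonneg]
  · exact norm_sB_le hk0 hlam hu.norm_le_sqrt n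
  · exact add_nonneg (norm_nonneg _) (norm_nonneg _)

theorem norm_sB_le_of_energyLE (hk0 : 0 < k0) (hlam : 0 < lam) {u : ℤ → ℂ} {M : ℝ}
    (hu : EnergyLE u M) (n : ℤ) :
    ‖sB a b c k0 lam u n‖ ≤ kk k0 lam n * √(sBDualBound a b c lam M) := by
  have hk := kk_pos hk0 hlam n
  have h := (energyLE_inv_kk_smul_sB (a := a) (b := b) (c := c) hk0 hlam hu).norm_le_sqrt n
  rwa [norm_smul, norm_inv, Real.norm_of_nonneg hk.le, inv_mul_le_iff₀ hk] at h

theorem isGalerkinAdmissible_sub_sB (habc : a + b + c = 0) {f : ℤ → ℂ} {F : ℝ}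
    (hf : EnergyLE f F) (S : Finset ℤ) :
    IsGalerkinAdmissible (fun u n => f n - sB a b c k0 lam u n) S 1 F where
  contDiff n := contDiff_const.sub (contDiff_sB (contDiff_extendZero S) n)
  inner_le u hu := calc
    2 * ∑ n ∈ S, inner ℝ (u n) (f n - sB a b c k0 lam u n)
      = ∑ n ∈ S, 2 * inner ℝ (u n) (f n) := by
        simp only [inner_sub_right, Finset.sum_sub_distrib, sum_inner_sB_eq_zero habc hu, sub_zero,
          Finset.mul_sum]
    _ ≤ ∑ n ∈ S, (‖u n‖ ^ 2 + ‖f n‖ ^ 2) := Finset.sum_le_sum fun n _ => by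
        linarith [norm_sub_sq_real (u n) (f n), sq_nonneg ‖u n - f n‖]
    _ ≤ 1 * ∑ n ∈ S, ‖u n‖ ^ 2 + F := by
        rw [Finset.sum_add_distrib, one_mul]
        exact add_le_add_right (hf S) _

theorem exists_shellwise_solution (hk0 : 0 < k0) (hlam : 0 < lam) (habc : a + b + c = 0) {T : ℝ}
    (hT : 0 ≤ T) {uin f : ℤ → ℂ} {A F : ℝ} (huin : EnergyLE uin A) (hf : EnergyLE f F) :
    ∃ (u : ℝ → ℤ → ℂ) (M : ℝ), (∀ t, ∀ n ≤ 0, u t n = 0) ∧ Continuous u ∧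
      (∀ t, EnergyLE (u t) M) ∧ ∀ n, 0 < n → ∀ t ∈ Set.Icc 0 T,
        u t n = uin n + t * f n - ∫ s in (0 : ℝ)..t, sB a b c k0 lam (u s) n := by
  have hF : 0 ≤ F := by simpa using hf ∅
  have hS : Monotone fun N : ℕ => Finset.Icc (1 : ℤ) N := fun _ _ h =>
    Finset.Icc_subset_Icc_right (Int.ofNat_le.2 h)
  obtain ⟨u, hu₀, hu, hM, heq⟩ := exists_integral_solution_of_galerkin hS
    (fun N => isGalerkinAdmissible_sub_sB (k0 := k0) (lam := lam) habc hf _)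
    (fun n => continuous_const.sub (continuous_sB n)) zero_le_one hF hT huin
    (fun u hu n => (norm_sub_le _ _).trans
      (add_le_add_right (norm_sB_le_of_energyLE hk0 hlam hu n) _))
  refine ⟨u, _, fun t n hn => hu₀ t n fun N hnN => ?_, hu, hM, fun n hn t ht => ?_⟩
  · exact absurd (Finset.mem_Icc.1 hnN).1 (by omega)
  · have hB : IntervalIntegrable (fun s => sB a b c k0 lam (u s) n) volume 0 t :=
      ((continuous_sB n).comp hu).intervalIntegrable 0 t
    rw [heq n.toNat n (Finset.mem_Icc.2 (by omega)) t ht,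
      intervalIntegral.integral_sub intervalIntegrable_const hB, intervalIntegral.integral_const,
      sub_zero, Complex.real_smul, add_sub_assoc]

end Nonlinearity

section WeakFormulation

theorem shell_injective : Function.Injective fun n : ℕ => (n : ℤ) + 1 :=
  fun _ _ h => Int.ofNat_inj.1 (add_right_cancel h)

theorem summable_shells_iff {G : Type*} [AddCommMonoid G] [TopologicalSpace G] {g : ℤ → G}
    (hg : ∀ n ≤ 0, g n = 0) : (Summable fun n : ℕ => g ((n : ℤ) + 1)) ↔ Summable g :=
  shell_injective.summable_iff fun n hn => hg n <| not_lt.1 fun hpos =>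
    hn ⟨(n - 1).toNat, by dsimp only; omega⟩

theorem zpow_neg_two_mul_sq_norm {E : Type*} [SeminormedAddCommGroup E] [NormedSpace ℝ E] (k : ℝ)
    (x : E) : k ^ (-2 : ℤ) * ‖x‖ ^ 2 = ‖k⁻¹ • x‖ ^ 2 := by
  rw [norm_smul, mul_pow, Real.norm_eq_abs, sq_abs, inv_pow, zpow_neg, zpow_ofNat]

theorem sum_norm_mul_conj_le {ι : Type*} {k : ι → ℝ} (hk : ∀ i, k i ≠ 0) {g v : ι → ℂ} {M N : ℝ}
    (hg : EnergyLE (fun i => (k i)⁻¹ • g i) M) (hv : EnergyLE (fun i => k i • v i) N)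
    (s : Finset ι) : ∑ i ∈ s, ‖g i * (starRingEnd ℂ) (v i)‖ ≤ (M + N) / 2 := by
  refine (Finset.sum_congr rfl fun i _ => ?_).trans_le (hg.sum_norm_mul_norm_le hv s)
  rw [norm_mul, RCLike.norm_conj, norm_smul, norm_smul, mul_mul_mul_comm, norm_inv,
    inv_mul_cancel₀ (norm_ne_zero_iff.2 (hk i)), one_mul]

variable {a b c k0 lam T M F : ℝ} {u : ℝ → ℤ → ℂ} {uin f g v : ℤ → ℂ}

theorem energyLE_inv_kk_smul_shells (hk0 : 0 < k0) (hlam : 1 ≤ lam)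
    (hg : EnergyLE (fun n : ℕ => g ((n : ℤ) + 1)) M) :
    EnergyLE (fun n : ℕ => (kk k0 lam ((n : ℤ) + 1))⁻¹ • g ((n : ℤ) + 1)) (k0⁻¹ ^ 2 * M) :=
  hg.of_norm_le fun n => by
    have hk := le_kk hk0.le hlam (n := (n : ℤ) + 1) (by positivity)
    rw [norm_smul, norm_inv, Real.norm_of_nonneg (hk0.le.trans hk)]
    gcongr

theorem energyLE_inv_kk_smul_sub_sB (hk0 : 0 < k0) (hlam : 1 ≤ lam) {u : ℤ → ℂ}
    (hf : EnergyLE (fun n : ℕ => f ((n : ℤ) + 1)) F) (hu : EnergyLE u M) :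
    EnergyLE (fun n : ℕ => (kk k0 lam ((n : ℤ) + 1))⁻¹ •
        (f ((n : ℤ) + 1) - sB a b c k0 lam u ((n : ℤ) + 1)))
      (2 * (k0⁻¹ ^ 2 * F + sBDualBound a b c lam M)) := by
  have hB := (energyLE_inv_kk_smul_sB (a := a) (b := b) (c := c) hk0
    (zero_lt_one.trans_le hlam) hu).comp_injective shell_injective
  simpa only [sub_eq_add_neg, smul_add, smul_neg, Function.comp_apply] using
    (energyLE_inv_kk_smul_shells hk0 hlam hf).add hB.neg

theorem InTestV.energyLE (hv : InTestV k0 lam v) :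
    EnergyLE (fun n : ℕ => kk k0 lam ((n : ℤ) + 1) • v ((n : ℤ) + 1))
      (∑' n : ℕ, kk k0 lam ((n : ℤ) + 1) ^ 2 * ‖v ((n : ℤ) + 1)‖ ^ 2) := by
  have hsq (n : ℕ) : kk k0 lam ((n : ℤ) + 1) ^ 2 * ‖v ((n : ℤ) + 1)‖ ^ 2 =
      ‖kk k0 lam ((n : ℤ) + 1) • v ((n : ℤ) + 1)‖ ^ 2 := by
    rw [norm_smul, mul_pow, Real.norm_eq_abs, sq_abs]
  have hsum := hv.2
  simp only [hsq] at hsum ⊢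
  exact .of_summable hsum

theorem InTestV.summable_mul_conj (hk0 : 0 < k0) (hlam : 1 ≤ lam) (hv : InTestV k0 lam v)
    (hg : Summable fun n : ℕ => ‖g ((n : ℤ) + 1)‖ ^ 2) :
    Summable fun n : ℕ => g ((n : ℤ) + 1) * (starRingEnd ℂ) (v ((n : ℤ) + 1)) :=
  .of_norm <| summable_of_sum_le (fun _ => norm_nonneg _) <|
    sum_norm_mul_conj_le (fun _ => (kk_pos hk0 (zero_lt_one.trans_le hlam) _).ne')
      (energyLE_inv_kk_smul_shells hk0 hlam (.of_summable hg)) hv.energyLE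

/-- Duality between `V_{-1}` and `V` bounds the partial sums of the pairing uniformly in time. -/
theorem InTestV.hasSum_integral_sB (hk0 : 0 < k0) (hlam : 0 < lam) (hv : InTestV k0 lam v)
    (hu : Continuous u) (hM : ∀ t, EnergyLE (u t) M) (t : ℝ) :
    HasSum (fun n : ℕ => (∫ s in (0 : ℝ)..t, sB a b c k0 lam (u s) ((n : ℤ) + 1)) *
        (starRingEnd ℂ) (v ((n : ℤ) + 1)))
      (∫ s in (0 : ℝ)..t,
        ∑' n : ℕ, sB a b c k0 lam (u s) ((n : ℤ) + 1) * (starRingEnd ℂ) (v ((n : ℤ) + 1))) := by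
  have hB (s : ℝ) := (energyLE_inv_kk_smul_sB (a := a) (b := b) (c := c) hk0 hlam
    (hM s)).comp_injective shell_injective
  simp only [← intervalIntegral.integral_mul_const]
  exact hasSum_intervalIntegral_of_sum_norm_le
    (fun n => (((continuous_sB _).comp hu).mul continuous_const).intervalIntegrable 0 t)
    fun s _ => sum_norm_mul_conj_le (fun n : ℕ => (kk_pos hk0 hlam ((n : ℤ) + 1)).ne') (hB s)
      hv.energyLE

theorem isWeakSolution_of_shellwise (hk0 : 0 < k0) (hlam : 1 ≤ lam)
    (huin : Summable fun n : ℕ => ‖uin ((n : ℤ) + 1)‖ ^ 2)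
    (hf : Summable fun n : ℕ => ‖f ((n : ℤ) + 1)‖ ^ 2) (hu₀ : ∀ t, ∀ n ≤ 0, u t n = 0)
    (hu : Continuous u) (hM : ∀ t, EnergyLE (u t) M)
    (heq : ∀ n, 0 < n → ∀ t ∈ Set.Icc 0 T,
      u t n = uin n + t * f n - ∫ s in (0 : ℝ)..t, sB a b c k0 lam (u s) n) :
    IsWeakSolution a b c k0 lam T uin f u := by
  have hshells (t : ℝ) : EnergyLE (fun n : ℕ => u t ((n : ℤ) + 1)) M :=
    (hM t).comp_injective shell_injective
  refine ⟨hu₀, ⟨M, fun t _ => ⟨(hshells t).summable, (hshells t).tsum_le⟩⟩,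
    fun n => ((continuous_apply n).comp hu).continuousOn, fun v hv t ht => ?_⟩
  have hpair (n : ℕ) := congrArg (· * (starRingEnd ℂ) (v ((n : ℤ) + 1)))
    (heq ((n : ℤ) + 1) (by positivity) t ht)
  have hsum := ((hv.summable_mul_conj hk0 hlam huin).hasSum.add
    ((hv.summable_mul_conj hk0 hlam hf).hasSum.mul_left (t : ℂ))).sub
    (hv.hasSum_integral_sB (a := a) (b := b) (c := c) hk0 (zero_lt_one.trans_le hlam) hu hM t)
  simp only [← mul_assoc, ← add_mul, ← sub_mul, ← hpair] at hsum
  rw [hsum.tsum_eq, sub_add_cancel]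

end WeakFormulation

end SabraShellModel
/-- for ℓ² data `u^{in}, f` and any `0 < T < ∞` there exists a weak solution
of the inviscid sabra shell model on `[0,T]`, with `du/dt = f - B(u,u)` bounded in
`V_{-1}` uniformly on `[0,T]`. -/
theorem sabra_weak_solution_existence
    (a b c k0 lam : ℝ) (hk0 : 0 < k0) (hlam : 1 < lam) (habc : a + b + c = 0)
    (T : ℝ) (hT : 0 < T)
    (uin f : ℤ → ℂ)
    (huin0 : ∀ n : ℤ, n ≤ 0 → uin n = 0) (hf0 : ∀ n : ℤ, n ≤ 0 → f n = 0)
    (huin : Summable fun n : ℕ => ‖uin ((n : ℤ) + 1)‖ ^ 2)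
    (hf : Summable fun n : ℕ => ‖f ((n : ℤ) + 1)‖ ^ 2) :
    ∃ u : ℝ → ℤ → ℂ, IsWeakSolution a b c k0 lam T uin f u ∧
      ∃ M : ℝ, ∀ t ∈ Set.Icc (0 : ℝ) T,
        (Summable fun n : ℕ =>
          (kk k0 lam ((n : ℤ) + 1)) ^ (-2 : ℤ) *
            ‖f ((n : ℤ) + 1) - sB a b c k0 lam (u t) ((n : ℤ) + 1)‖ ^ 2) ∧
        (∑' n : ℕ, (kk k0 lam ((n : ℤ) + 1)) ^ (-2 : ℤ) *
            ‖f ((n : ℤ) + 1) - sB a b c k0 lam (u t) ((n : ℤ) + 1)‖ ^ 2) ≤ M := by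
  have hA := EnergyLE.of_summable <| (summable_shells_iff fun n hn => by simp [huin0 n hn]).1 huin
  have hF := EnergyLE.of_summable <| (summable_shells_iff fun n hn => by simp [hf0 n hn]).1 hf
  obtain ⟨u, M, hu₀, hu, hM, heq⟩ :=
    exists_shellwise_solution hk0 (zero_lt_one.trans hlam) habc hT.le hA hF
  have hdual (t : ℝ) := energyLE_inv_kk_smul_sub_sB (a := a) (b := b) (c := c) hk0 hlam.le
    (.of_summable hf) (hM t)
  simp only [zpow_neg_two_mul_sq_norm]
  exact ⟨u, isWeakSolution_of_shellwise hk0 hlam.le huin hf hu₀ hu hM heq, _,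
    fun t _ => ⟨(hdual t).summable, (hdual t).tsum_le⟩⟩
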